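/- As ε → 0⁺, (L(ε) − 3/π)/√ε → 0; that is, L(ε) = 3/π + o(√ε). -/

import Mathlib

/-- `L ε = 2√ε · Σ_{q ≥ 1, q² ≤ 1/ε} φ(q)·√(1/q² − ε)`. -/
noncomputable def L (ε : ℝ) : ℝ :=
  2 * Real.sqrt ε *
    ∑' q : ℕ, if 1 ≤ q ∧ (q : ℝ) ^ 2 ≤ 1 / ε then
      (Nat.totient q : ℝ) * Real.sqrt (1 / (q : ℝ) ^ 2 - ε) else 0

open MeasureTheory Filter Topology FourierTransform

lemma T_int (g : ℝ → ℂ) (hgm : Measurable g) (hb : ∀ u, ‖g u‖ ≤ 1) (h0 : ∀ u < 0, g u = 0)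
    (σ : ℝ) (hσ : 0 < σ) : Integrable (fun u : ℝ => g u * Complex.exp (-(σ:ℂ) * u)) := by
  have h1 : IntegrableOn (fun u : ℝ => Real.exp (-σ * u)) (Set.Ioi (-1)) :=
    exp_neg_integrableOn_Ioi (-1) hσ
  have h2 : Integrable (Set.indicator (Set.Ioi (-1:ℝ)) (fun u : ℝ => Real.exp (-σ * u))) :=
    (integrable_indicator_iff measurableSet_Ioi).2 h1
  refine h2.mono' ?_ ?_
  · exact (hgm.mul (by fun_prop)).aestronglyMeasurable
  · refine Eventually.of_forall fun u => ?_
    by_cases hu : u < 0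
    · simp only [h0 u hu, zero_mul, norm_zero]
      exact Set.indicator_nonneg (fun _ _ => (Real.exp_pos _).le) _
    · rw [Set.indicator_of_mem (by simp; linarith), norm_mul, Complex.norm_exp]
      have : (-(σ:ℂ) * u).re = -σ * u := by simp
      rw [this]
      calc _ ≤ 1 * Real.exp (-σ * u) := by gcongr; exact hb u
        _ = _ := one_mul _

lemma T_fub (g : ℝ → ℂ) (hgm : Measurable g) (hb : ∀ u, ‖g u‖ ≤ 1) (h0 : ∀ u < 0, g u = 0)
    (G : ℂ → ℂ)
    (hG : ∀ s : ℂ, 0 < s.re → ∫ u : ℝ, g u * Complex.exp (-s * u) = G s)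
    (ψ : ℝ → ℂ) (hψc : Continuous ψ) (hψs : HasCompactSupport ψ)
    (x σ : ℝ) (hσ : 0 < σ) :
    ∫ u : ℝ, (g u * Complex.exp (-(σ:ℂ) * u)) * 𝓕 ψ (u - x) =
      ∫ t : ℝ, Complex.exp ((-2 * Real.pi * t * (-x) : ℝ) * Complex.I) *
        (ψ t * G (σ + 2 * Real.pi * t * Complex.I)) := by
  have hψi : Integrable ψ := hψc.integrable_of_hasCompactSupport hψs
  have hI := T_int g hgm hb h0 σ hσ
  have key := integral_integral_swap (μ := (volume : Measure ℝ)) (ν := (volume : Measure ℝ))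
    (f := fun u t : ℝ => (g u * Complex.exp (-(σ:ℂ) * u)) *
      (Complex.exp ((-2 * Real.pi * t * (u - x) : ℝ) * Complex.I) * ψ t)) (by
      have := hI.mul_prod hψi
      have h2 := this.bdd_mul (f := fun p : ℝ × ℝ =>
        Complex.exp ((-2 * Real.pi * p.2 * (p.1 - x) : ℝ) * Complex.I)) (c := 1)
        (by apply Continuous.aestronglyMeasurable; fun_prop)
        (Eventually.of_forall fun p => by rw [Complex.norm_exp_ofReal_mul_I])
      refine h2.congr (Eventually.of_forall fun p => ?_)
      simp only [Function.uncurry]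
      ring)
  calc _ = ∫ u : ℝ, ∫ t : ℝ, (g u * Complex.exp (-(σ:ℂ) * u)) *
      (Complex.exp ((-2 * Real.pi * t * (u - x) : ℝ) * Complex.I) * ψ t) := by
        congr 1; ext u
        rw [Real.fourier_real_eq_integral_exp_smul, ← integral_const_mul]
        rfl
    _ = _ := key
    _ = _ := by
        congr 1; ext t
        rw [← hG _ (by simpa using hσ), ← integral_const_mul, ← integral_const_mul]
        congr 1; ext u
        have : Complex.exp ((-2 * Real.pi * t * (u - x) : ℝ) * Complex.I) *
            Complex.exp (-(σ:ℂ) * u) =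
          Complex.exp ((-2 * Real.pi * t * (-x) : ℝ) * Complex.I) *
            Complex.exp (-(σ + 2 * Real.pi * t * Complex.I) * u) := by
          rw [← Complex.exp_add, ← Complex.exp_add]
          congr 1; push_cast; ring
        linear_combination (g u * ψ t) * this

lemma T1 (g : ℝ → ℂ) (hgm : Measurable g) (hb : ∀ u, ‖g u‖ ≤ 1) (h0 : ∀ u < 0, g u = 0)
    (G : ℂ → ℂ) (hGc : ContinuousOn G {s | 0 ≤ s.re})
    (hG : ∀ s : ℂ, 0 < s.re → ∫ u : ℝ, g u * Complex.exp (-s * u) = G s)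
    (ψ : ℝ → ℂ) (hψc : Continuous ψ) (hψs : HasCompactSupport ψ) (hK : Integrable (𝓕 ψ)) :
    Tendsto (fun x : ℝ => ∫ u : ℝ, g u * 𝓕 ψ (u - x)) atTop (𝓝 0) := by
  have hψi : Integrable ψ := hψc.integrable_of_hasCompactSupport hψs
  -- limit identity
  have hid : ∀ x : ℝ, ∫ u : ℝ, g u * 𝓕 ψ (u - x) =
      𝓕 (fun t : ℝ => ψ t * G (2 * Real.pi * t * Complex.I)) (-x) := by
    intro x
    rw [Real.fourier_real_eq_integral_exp_smul]
    have hL : Tendsto (fun σ : ℝ => ∫ u : ℝ, (g u * Complex.exp (-(σ:ℂ) * u)) * 𝓕 ψ (u - x))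
        (𝓝[>] 0) (𝓝 (∫ u : ℝ, g u * 𝓕 ψ (u - x))) := by
      refine tendsto_integral_filter_of_dominated_convergence (fun u => ‖𝓕 ψ (u - x)‖) ?_ ?_ ?_ ?_
      · refine Eventually.of_forall fun σ => ?_
        exact ((hgm.mul (by fun_prop)).aestronglyMeasurable).mul
          (hK.comp_sub_right x).aestronglyMeasurable
      · filter_upwards [self_mem_nhdsWithin] with σ hσ
        refine Eventually.of_forall fun u => ?_
        rw [norm_mul]
        refine mul_le_of_le_one_left (norm_nonneg _) ?_
        by_cases hu : u < 0
        · simp [h0 u hu]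
        · rw [norm_mul, Complex.norm_exp]
          have h1 : (-(σ:ℂ) * u).re = -σ * u := by simp
          rw [h1]
          have h2 : Real.exp (-σ * u) ≤ 1 := by
            rw [Real.exp_le_one_iff]
            have : 0 < σ := hσ
            push Not at hu
            nlinarith
          exact mul_le_one₀ (hb u) (Real.exp_pos _).le h2
      · exact (hK.comp_sub_right x).norm
      · refine Eventually.of_forall fun u => ?_
        refine Tendsto.mul_const _ ?_
        have : Continuous (fun σ : ℝ => g u * Complex.exp (-(σ:ℂ) * u)) := by fun_prop
        have h := (this.tendsto 0).mono_left (nhdsWithin_le_nhds (s := Set.Ioi 0))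
        simpa using h
    have hR : Tendsto (fun σ : ℝ => ∫ t : ℝ,
        Complex.exp ((-2 * Real.pi * t * (-x) : ℝ) * Complex.I) *
        (ψ t * G (σ + 2 * Real.pi * t * Complex.I)))
        (𝓝[>] 0) (𝓝 (∫ t : ℝ, Complex.exp ((-2 * Real.pi * t * (-x) : ℝ) * Complex.I) *
        (ψ t * G (2 * Real.pi * t * Complex.I)))) := by
      have hcomp : IsCompact ((fun p : ℝ × ℝ => ((p.1:ℂ) + 2 * Real.pi * p.2 * Complex.I)) ''
          (Set.Icc 0 1 ×ˢ tsupport ψ)) :=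
        (isCompact_Icc.prod hψs).image (by fun_prop)
      obtain ⟨C, hC⟩ := hcomp.exists_bound_of_continuousOn (f := G) (hGc.mono (by
        rintro _ ⟨p, hp, rfl⟩
        simpa using hp.1.1))
      have hcont : ∀ σ : ℝ, 0 ≤ σ →
          Continuous (fun t : ℝ => G (σ + 2 * Real.pi * t * Complex.I)) := by
        intro σ hσ
        exact hGc.comp_continuous (by fun_prop) (fun t => by simpa using hσ)
      refine tendsto_integral_filter_of_dominated_convergence (fun t => ‖ψ t‖ * C) ?_ ?_ ?_ ?_
      · filter_upwards [self_mem_nhdsWithin] with σ hσ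
        have := hcont σ (le_of_lt hσ)
        exact (Continuous.mul (by fun_prop) (hψc.mul this)).aestronglyMeasurable
      · filter_upwards [Ioc_mem_nhdsGT (zero_lt_one' ℝ)] with σ hσ
        refine Eventually.of_forall fun t => ?_
        rw [norm_mul, Complex.norm_exp_ofReal_mul_I, one_mul, norm_mul]
        by_cases ht : t ∈ tsupport ψ
        · gcongr
          exact hC _ ⟨(σ, t), ⟨⟨hσ.1.le, hσ.2⟩, ht⟩, rfl⟩
        · rw [image_eq_zero_of_notMem_tsupport ht]; simp
      · exact hψi.norm.mul_const C
      · refine Eventually.of_forall fun t => ?_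
        refine Tendsto.const_mul _ (Tendsto.const_mul _ ?_)
        have h1 : ContinuousWithinAt G {s | 0 ≤ s.re} (2 * Real.pi * t * Complex.I) :=
          hGc _ (by simp)
        refine h1.tendsto.comp (tendsto_nhdsWithin_iff.2 ⟨?_, ?_⟩)
        · have : Continuous (fun σ : ℝ => (σ:ℂ) + 2 * Real.pi * t * Complex.I) := by fun_prop
          have h := (this.tendsto 0).mono_left (nhdsWithin_le_nhds (s := Set.Ioi 0))
          simpa using h
        · filter_upwards [self_mem_nhdsWithin] with σ hσ
          simpa using le_of_lt hσ
    refine tendsto_nhds_unique hL (hR.congr' ?_)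
    filter_upwards [self_mem_nhdsWithin] with σ hσ
    exact (T_fub g hgm hb h0 G hG ψ hψc hψs x σ hσ).symm
  simp_rw [hid]
  have := Real.zero_at_infty_fourier (fun t : ℝ => ψ t * G (2 * Real.pi * t * Complex.I))
  refine this.comp ?_
  rw [cocompact_eq_atBot_atTop]
  exact (tendsto_neg_atTop_atBot).mono_right le_sup_left

lemma exists_kernel : ∃ ψ : ℝ → ℂ, Continuous ψ ∧ HasCompactSupport ψ ∧ Integrable (𝓕 ψ) ∧
    Integrable (fun w : ℝ => |w| * ‖𝓕 ψ w‖) ∧ ∫ w, 𝓕 ψ w = 1 := by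
  let f : ContDiffBump (0:ℝ) := ⟨1, 2, one_pos, one_lt_two⟩
  let ψ : ℝ → ℂ := fun t => ((f t : ℝ) : ℂ)
  have hs : HasCompactSupport ψ := f.hasCompactSupport.comp_left (g := fun r : ℝ => (r:ℂ)) (by simp)
  have hd : ContDiff ℝ (⊤ : ℕ∞) ψ := Complex.ofRealCLM.contDiff.comp f.contDiff
  let S : SchwartzMap ℝ ℂ := hs.toSchwartzMap hd
  have hS : (S : ℝ → ℂ) = ψ := rfl
  have hF : ((𝓕 S : SchwartzMap ℝ ℂ) : ℝ → ℂ) = 𝓕 ψ := by rw [SchwartzMap.fourier_coe, hS]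
  have hi : Integrable (𝓕 ψ) := by rw [← hF]; exact (𝓕 S).integrable
  have hψi : Integrable ψ := hd.continuous.integrable_of_hasCompactSupport hs
  refine ⟨ψ, hd.continuous, hs, hi, ?_, ?_⟩
  · have := (𝓕 S).integrable_pow_mul volume 1
    rw [hF] at this
    simpa using this
  · have h := congrFun (hd.continuous.fourierInv_fourier_eq hψi hi) 0
    rw [Real.fourierInv_eq'] at h
    have h1 : ψ 0 = 1 := by
      simp only [ψ]
      rw [f.one_of_mem_closedBall (by simp [f.rIn_pos.le])]; simp
    rw [h1] at h
    simpa using h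

theorem taub (g : ℝ → ℂ) (hgm : Measurable g) (hb : ∀ u, ‖g u‖ ≤ 1) (h0 : ∀ u < 0, g u = 0)
    (hslow : ∀ x y : ℝ, 0 ≤ x → x ≤ y → ‖g y - g x‖ ≤ (y - x) + 2 * Real.exp (-x))
    (G : ℂ → ℂ) (hGc : ContinuousOn G {s | 0 ≤ s.re})
    (hG : ∀ s : ℂ, 0 < s.re → ∫ u : ℝ, g u * Complex.exp (-s * u) = G s) :
    Tendsto g atTop (𝓝 0) := by
  obtain ⟨ψ, hψc, hψs, hK, hK1, hK2⟩ := exists_kernel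
  set K := 𝓕 ψ with hKdef
  have hh : ∀ l : ℝ, 0 < l →
      Tendsto (fun x : ℝ => ∫ w : ℝ, g (x + w / l) * K w) atTop (𝓝 0) := by
    intro l hl
    have := T1 (fun u => g (u / l)) (hgm.comp (by fun_prop)) (fun u => hb _)
      (fun u hu => h0 _ (div_neg_of_neg_of_pos hu hl)) (fun s => l * G (l * s))
      (by
        refine ContinuousOn.mul continuousOn_const (hGc.comp (by fun_prop) ?_)
        intro s hs
        simp only [Set.mem_ofPred_eq, Complex.re_ofReal_mul] at hs ⊢
        positivity)
      (by
        intro s hs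
        rw [← hG (l * s) (by rw [Complex.re_ofReal_mul]; positivity)]
        have := Measure.integral_comp_div (fun u : ℝ => g u * Complex.exp (-(l * s) * u)) l
        rw [abs_of_pos hl] at this
        rw [← Complex.real_smul, ← this]
        congr 1; ext u
        congr 2
        have : (l:ℂ) ≠ 0 := by exact_mod_cast hl.ne'
        push_cast
        field_simp)
      ψ hψc hψs hK
    have h2 := this.comp (tendsto_id.const_mul_atTop hl)
    refine h2.congr fun x => ?_
    simp only [Function.comp, id]
    rw [← integral_add_right_eq_self _ (l * x)]
    congr 1; ext w
    rw [add_sub_cancel_right]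
    congr 2
    field_simp
    ring
  set A := ∫ w : ℝ, |w| * ‖K w‖ with hA
  set B := ∫ w : ℝ, ‖K w‖ with hB
  have hA0 : 0 ≤ A := integral_nonneg fun w => by positivity
  have hB0 : 0 ≤ B := integral_nonneg fun w => by positivity
  have hest : ∀ l : ℝ, 0 < l → ∀ x : ℝ, 4 ≤ x →
      ‖g x - ∫ w : ℝ, g (x + w / l) * K w‖ ≤ A / l + 2 * Real.exp (-(x/2)) * B := by
    intro l hl x hx
    have hi1 : Integrable (fun w : ℝ => g (x + w / l) * K w) :=
      hK.bdd_mul (c := 1) ((hgm.comp (by fun_prop)).aestronglyMeasurable)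
        (Eventually.of_forall fun w => hb _)
    have e1 : g x = ∫ w : ℝ, g x * K w := by rw [integral_const_mul, hK2, mul_one]
    have e2 : g x - ∫ w : ℝ, g (x + w / l) * K w = ∫ w : ℝ, (g x - g (x + w / l)) * K w := by
      conv_lhs => rw [e1]
      rw [← integral_sub (hK.const_mul _) hi1]
      congr 1; ext w; ring
    rw [e2]
    have e3 : A / l + 2 * Real.exp (-(x/2)) * B =
        ∫ w : ℝ, (|w| * ‖K w‖) / l + 2 * Real.exp (-(x/2)) * ‖K w‖ := by
      rw [integral_add (hK1.div_const _) (hK.norm.const_mul _), integral_div, integral_const_mul]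
    rw [e3]
    refine norm_integral_le_of_norm_le ((hK1.div_const _).add (hK.norm.const_mul _)) ?_
    refine Eventually.of_forall fun w => ?_
    rw [norm_mul]
    have : ‖g x - g (x + w / l)‖ ≤ |w| / l + 2 * Real.exp (-(x/2)) := by
      have hv : |w| / l = |w / l| := by rw [abs_div, abs_of_pos hl]
      rw [hv]
      set v := w / l
      by_cases hvx : |v| ≤ x / 2
      · rw [abs_le] at hvx
        rcases le_total 0 v with h | h
        · have := hslow x (x + v) (by linarith) (by linarith)
          rw [norm_sub_rev, abs_of_nonneg h]
          have h3 : Real.exp (-x) ≤ Real.exp (-(x/2)) := Real.exp_le_exp.2 (by linarith)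
          linarith
        · have := hslow (x + v) x (by linarith) (by linarith)
          rw [abs_of_nonpos h]
          have h3 : Real.exp (-(x+v)) ≤ Real.exp (-(x/2)) := Real.exp_le_exp.2 (by linarith)
          linarith
      · push Not at hvx
        have h1 := norm_sub_le (g x) (g (x + v))
        have h2 := hb x
        have h3 := hb (x + v)
        have h4 := Real.exp_pos (-(x/2))
        linarith
    calc _ ≤ (|w| / l + 2 * Real.exp (-(x/2))) * ‖K w‖ := by gcongr
      _ = _ := by ring
  rw [Metric.tendsto_atTop]
  intro ε hε
  obtain ⟨l, hl, hl2⟩ : ∃ l : ℝ, 0 < l ∧ A / l < ε / 3 := by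
    refine ⟨3 * (A + 1) / ε, by positivity, ?_⟩
    rw [div_div_eq_mul_div, div_lt_div_iff₀ (by positivity) (by positivity)]
    nlinarith
  have hexp : Tendsto (fun x : ℝ => 2 * Real.exp (-(x/2)) * B) atTop (𝓝 0) := by
    have : Tendsto (fun x : ℝ => Real.exp (-(x/2))) atTop (𝓝 0) :=
      Real.tendsto_exp_neg_atTop_nhds_zero.comp (tendsto_id.atTop_div_const two_pos)
    simpa using (this.const_mul 2).mul_const B
  have e1 := (Metric.tendsto_nhds.1 hexp) (ε/3) (by positivity)
  have e2 := (Metric.tendsto_nhds.1 (hh l hl)) (ε/3) (by positivity)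
  obtain ⟨N, hN⟩ := eventually_atTop.1 ((e1.and e2).and (eventually_ge_atTop 4))
  refine ⟨N, fun x hx => ?_⟩
  obtain ⟨⟨h1, h2⟩, h3⟩ := hN x hx
  have h4 := hest l hl x h3
  rw [dist_zero_right] at h2 ⊢
  rw [Real.dist_eq, sub_zero] at h1
  have h5 := le_abs_self (2 * Real.exp (-(x/2)) * B)
  have h6 := norm_sub_norm_le (g x) (∫ w : ℝ, g (x + w / l) * K w)
  linarith
/-- the coefficients mu(n)/n -/
noncomputable def cf (n : ℕ) : ℝ := (ArithmeticFunction.moebius n : ℝ) / n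

noncomputable def mm (N : ℕ) : ℝ := ∑ k ∈ Finset.Icc 1 N, cf k

lemma abs_cf_le (n : ℕ) : |cf n| ≤ 1 / n := by
  unfold cf
  rw [abs_div, Nat.abs_cast]
  gcongr
  have := ArithmeticFunction.abs_moebius_le_one (n := n)
  exact_mod_cast this

lemma abs_mm_le (N : ℕ) : |mm N| ≤ 1 := by
  rcases Nat.eq_zero_or_pos N with rfl | hN
  · simp [mm]
  have h1 := ArithmeticFunction.sum_Ioc_mul_zeta_eq_sum (R := ℤ) ArithmeticFunction.moebius N
  rw [ArithmeticFunction.moebius_mul_coe_zeta] at h1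
  have h2 : ∑ n ∈ Finset.Ioc 0 N, (1 : ArithmeticFunction ℤ) n = 1 := by
    rw [Finset.sum_eq_single 1]
    · simp
    · intro b _ hb; simp [ArithmeticFunction.one_apply_ne hb]
    · intro h; simp at h; omega
  rw [h2] at h1
  have hI : Finset.Ioc 0 N = Finset.Icc 1 N := by ext; simp; omega
  rw [hI] at h1
  have h3 : (N : ℝ) * mm N = 1 + ∑ n ∈ Finset.Icc 1 N, cf n * ((N % n : ℕ) : ℝ) := by
    have : (1:ℝ) = ∑ n ∈ Finset.Icc 1 N, (ArithmeticFunction.moebius n : ℝ) * ((N / n : ℕ) : ℝ) := by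
      have h := congrArg (Int.cast : ℤ → ℝ) h1
      simpa only [Int.cast_one, Int.cast_sum, Int.cast_mul, Int.cast_natCast] using h
    rw [this, ← Finset.sum_add_distrib, mm, Finset.mul_sum]
    refine Finset.sum_congr rfl fun n hn => ?_
    have hn0 : (n:ℝ) ≠ 0 := by simp at hn; exact_mod_cast (by omega)
    have : (N:ℝ) = n * ((N/n : ℕ):ℝ) + ((N % n : ℕ):ℝ) := by exact_mod_cast (Nat.div_add_mod N n).symm
    rw [cf]
    field_simp
    rw [this]
    have e2 : ((↑n * ((N / n : ℕ):ℝ) + ((N % n : ℕ):ℝ))) = N := this.symm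
    ring_nf
  have h4 : |∑ n ∈ Finset.Icc 1 N, cf n * ((N % n : ℕ) : ℝ)| ≤ N - 1 := by
    rw [← Finset.add_sum_Ioc_eq_sum_Icc (by omega : 1 ≤ N)]
    simp only [Nat.mod_one, Nat.cast_zero, mul_zero, zero_add]
    calc _ ≤ ∑ n ∈ Finset.Ioc 1 N, |cf n * ((N % n : ℕ) : ℝ)| := Finset.abs_sum_le_sum_abs _ _
      _ ≤ ∑ n ∈ Finset.Ioc 1 N, (1:ℝ) := by
          refine Finset.sum_le_sum fun n hn => ?_
          simp at hn
          have hn0 : (0:ℝ) < n := by exact_mod_cast (by omega)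
          rw [abs_mul, Nat.abs_cast]
          calc _ ≤ 1 / (n:ℝ) * n := by
                gcongr
                · exact abs_cf_le n
                · exact (Nat.mod_lt _ (by omega)).le
            _ = 1 := by field_simp
      _ = _ := by simp [Nat.cast_sub hN]
  have hN' : (0:ℝ) < N := by exact_mod_cast hN
  have h5 : |(N:ℝ) * mm N| ≤ N := by
    rw [h3]
    have := abs_add_le (1:ℝ) (∑ n ∈ Finset.Icc 1 N, cf n * ((N % n : ℕ) : ℝ))
    rw [abs_one] at this
    linarith
  rw [abs_mul, Nat.abs_cast] at h5
  exact le_of_mul_le_mul_left (by linarith) hN'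

lemma mm_sub {N M : ℕ} (h : N ≤ M) : mm M - mm N = ∑ k ∈ Finset.Ioc N M, cf k := by
  induction M, h using Nat.le_induction with
  | base => simp
  | succ M h ih =>
    rw [Finset.sum_Ioc_succ_top (by omega), ← ih, mm, Finset.sum_Icc_succ_top (by omega), mm, mm]
    ring

lemma mm_slow {N M : ℕ} (hN : 0 < N) (h : N ≤ M) :
    |mm M - mm N| ≤ Real.log M - Real.log N := by
  induction M, h using Nat.le_induction with
  | base => simp
  | succ M h ih =>
    have h1 : mm (M+1) - mm N = (mm M - mm N) + cf (M+1) := by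
      rw [mm, Finset.sum_Icc_succ_top (by omega), mm, mm]; ring
    have hM : (0:ℝ) < M := by exact_mod_cast (by omega)
    have h2 : 1 / ((M+1 : ℕ) : ℝ) ≤ Real.log ((M+1:ℕ):ℝ) - Real.log M := by
      rw [← Real.log_div (by positivity) hM.ne']
      refine le_trans ?_ (Real.one_sub_inv_le_log_of_pos (by positivity))
      push_cast
      apply le_of_eq
      field_simp
      ring
    rw [h1]
    have := abs_add_le (mm M - mm N) (cf (M+1))
    have := abs_cf_le (M+1)
    linarith

/-- the summatory function on a log scale -/
noncomputable def gg (u : ℝ) : ℂ := (mm ⌊Real.exp u⌋₊ : ℝ)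

lemma gg_meas : Measurable gg := by
  have h1 : Measurable (fun n : ℕ => ((mm n : ℝ) : ℂ)) := measurable_from_top
  exact h1.comp (Nat.measurable_floor.comp Real.measurable_exp)

lemma gg_slow (x y : ℝ) (hx : 0 ≤ x) (hxy : x ≤ y) :
    ‖gg y - gg x‖ ≤ (y - x) + 2 * Real.exp (-x) := by
  have hex : 1 ≤ Real.exp x := Real.one_le_exp hx
  have hN : 0 < ⌊Real.exp x⌋₊ := Nat.floor_pos.2 hex
  have hNM : ⌊Real.exp x⌋₊ ≤ ⌊Real.exp y⌋₊ := Nat.floor_le_floor (Real.exp_le_exp.2 hxy)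
  have h1 := mm_slow hN hNM
  rw [gg, gg, ← Complex.ofReal_sub, Complex.norm_real, Real.norm_eq_abs]
  have h2 : Real.log (⌊Real.exp y⌋₊ : ℝ) ≤ y := by
    have : ((⌊Real.exp y⌋₊ : ℕ) : ℝ) ≤ Real.exp y := Nat.floor_le (Real.exp_pos _).le
    calc _ ≤ Real.log (Real.exp y) := Real.log_le_log (by exact_mod_cast (by omega)) this
      _ = y := Real.log_exp y
  set N := ⌊Real.exp x⌋₊ with hNdef
  have hN1 : (1:ℝ) ≤ N := by exact_mod_cast hN
  have h3 : Real.exp x < N + 1 := Nat.lt_floor_add_one _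
  have h4 : x - Real.log N ≤ 2 * Real.exp (-x) := by
    have : x - Real.log N = Real.log (Real.exp x / N) := by
      rw [Real.log_div (by positivity) (by positivity), Real.log_exp]
    rw [this]
    have h5 := Real.log_le_sub_one_of_pos (x := Real.exp x / N) (by positivity)
    refine h5.trans ?_
    have h6 : Real.exp x / N - 1 ≤ 1 / N := by
      rw [div_sub_one (by positivity)]
      gcongr; linarith
    refine h6.trans ?_
    rw [Real.exp_neg, ← div_eq_mul_inv, div_le_div_iff₀ (by positivity) (by positivity)]
    linarith
  linarith

noncomputable def Zf : ℂ → ℂ := Function.update (fun s => s * riemannZeta (1 + s)) 0 1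

lemma Zf_cont : Continuous Zf := by
  rw [continuous_iff_continuousAt]
  intro s
  rcases eq_or_ne s 0 with rfl | hs
  · unfold Zf
    rw [continuousAt_update_same]
    have h := riemannZeta_residue_one
    have h2 : Tendsto (fun s : ℂ => 1 + s) (𝓝[≠] 0) (𝓝[≠] 1) := by
      refine tendsto_nhdsWithin_iff.2 ⟨?_, ?_⟩
      · have : Continuous (fun s : ℂ => 1 + s) := by fun_prop
        have h := (this.tendsto 0).mono_left (nhdsWithin_le_nhds (s := {0}ᶜ))
        simpa using h
      · filter_upwards [self_mem_nhdsWithin] with s hs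
        simpa using hs
    refine (h.comp h2).congr fun s => ?_
    simp
  · unfold Zf
    rw [continuousAt_update_of_ne hs]
    refine continuousAt_id.mul ?_
    have h1 : ContinuousAt riemannZeta (1 + s) :=
      (differentiableAt_riemannZeta (by simpa using hs)).continuousAt
    exact ContinuousAt.comp' h1 (by fun_prop)

lemma Zf_ne {s : ℂ} (hs : 0 ≤ s.re) : Zf s ≠ 0 := by
  rcases eq_or_ne s 0 with rfl | h
  · simp [Zf]
  · rw [Zf, Function.update_of_ne h]
    exact mul_ne_zero h (riemannZeta_ne_zero_of_one_le_re (by simpa using hs))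

lemma cf_LSeries {s : ℂ} (hs : 0 < s.re) :
    LSeriesSummable (fun n => (cf n : ℂ)) s ∧
    LSeries (fun n => (cf n : ℂ)) s = (riemannZeta (1 + s))⁻¹ := by
  have ht : ∀ n, LSeries.term (fun n => (cf n : ℂ)) s n =
      LSeries.term (fun n => ((ArithmeticFunction.moebius n : ℤ) : ℂ)) (1 + s) n := by
    intro n
    rcases Nat.eq_zero_or_pos n with rfl | hn
    · simp
    · have hn0 : (n:ℂ) ≠ 0 := by exact_mod_cast hn.ne'
      rw [LSeries.term_of_ne_zero hn.ne', LSeries.term_of_ne_zero hn.ne', Complex.cpow_add _ _ hn0,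
        Complex.cpow_one, cf]
      push_cast
      rw [div_div]
  have h1 : 1 < (1 + s).re := by simpa using hs
  constructor
  · have := ArithmeticFunction.LSeriesSummable_moebius_iff.2 h1
    exact this.congr fun n => (ht n).symm
  · have h2 := ArithmeticFunction.LSeries_zeta_mul_Lseries_moebius h1
    rw [ArithmeticFunction.LSeries_zeta_eq_riemannZeta h1] at h2
    rw [inv_eq_of_mul_eq_one_right h2]
    exact tsum_congr ht

lemma gg_laplace (s : ℂ) (hs : 0 < s.re) :
    ∫ u : ℝ, gg u * Complex.exp (-s * u) = (Zf s)⁻¹ := by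
  have hs0 : s ≠ 0 := by rintro rfl; simp at hs
  obtain ⟨h1, h2⟩ := cf_LSeries hs
  have h3 := LSeries_eq_mul_integral (fun n => (cf n : ℂ)) le_rfl hs h1 (by
    refine Asymptotics.IsBigO.of_bound 1 (Eventually.of_forall fun n => ?_)
    have := abs_mm_le n
    rw [mm] at this
    rw [← Complex.ofReal_sum, Complex.norm_real, Real.norm_eq_abs]
    simpa using this)
  rw [h2] at h3
  have himg : Real.exp '' (Set.Ioi 0) = Set.Ioi 1 := by
    ext t
    constructor
    · rintro ⟨u, hu, rfl⟩; simpa using hu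
    · intro ht
      have : (1:ℝ) < t := ht
      exact ⟨Real.log t, Real.log_pos this, Real.exp_log (by linarith)⟩
  rw [← himg, integral_image_eq_integral_abs_deriv_smul measurableSet_Ioi
    (fun x _ => (Real.hasDerivAt_exp x).hasDerivWithinAt) Real.exp_injective.injOn] at h3
  have h4 : ∫ u : ℝ, gg u * Complex.exp (-s * u) =
      ∫ u in Set.Ioi (0:ℝ), gg u * Complex.exp (-s * u) := by
    rw [← integral_Ici_eq_integral_Ioi]
    symm
    apply setIntegral_eq_integral_of_forall_compl_eq_zero
    intro u hu
    have hu' : u < 0 := by simpa using hu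
    have : ⌊Real.exp u⌋₊ = 0 := Nat.floor_eq_zero.2 (by simpa using hu')
    rw [gg, this]; simp [mm]
  have h5 : ∀ u : ℝ, |Real.exp u| • ((∑ k ∈ Finset.Icc 1 ⌊Real.exp u⌋₊, (cf k : ℂ)) *
      ((Real.exp u : ℝ) : ℂ) ^ (-(s + 1))) = gg u * Complex.exp (-s * u) := by
    intro u
    rw [abs_of_pos (Real.exp_pos u), Complex.real_smul,
      Complex.cpow_def_of_ne_zero (by exact_mod_cast (Real.exp_pos u).ne'),
      ← Complex.ofReal_log (Real.exp_pos u).le, Real.log_exp, gg, mm, Complex.ofReal_exp,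
      mul_left_comm, ← Complex.exp_add]
    push_cast
    congr 2
    ring
  simp_rw [h5] at h3
  rw [h4, Zf, Function.update_of_ne hs0, mul_inv, h3]
  field_simp

theorem mm_tendsto : Tendsto mm atTop (𝓝 0) := by
  have h := taub gg gg_meas (fun u => by
      rw [gg, Complex.norm_real]; exact abs_mm_le _) (fun u hu => by
      have : ⌊Real.exp u⌋₊ = 0 := Nat.floor_eq_zero.2 (by simpa using hu)
      rw [gg, this]; simp [mm]) gg_slow (fun s => (Zf s)⁻¹)
    (Zf_cont.continuousOn.inv₀ fun s hs => Zf_ne hs) gg_laplace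
  have h2 : Tendsto (fun n : ℕ => Real.log n) atTop atTop :=
    Real.tendsto_log_atTop.comp tendsto_natCast_atTop_atTop
  have h3 := (h.comp h2).norm
  rw [norm_zero] at h3
  rw [tendsto_zero_iff_abs_tendsto_zero]
  refine h3.congr' ?_
  filter_upwards [eventually_gt_atTop 0] with n hn
  simp only [Function.comp, gg]
  rw [Real.exp_log (by exact_mod_cast hn), Nat.floor_natCast, Complex.norm_real]
  rfl

lemma conc_aux {Y x y a b : ℝ} (hx : |x / Y| ≤ 1) (hy : |y / Y| ≤ 1)
    (ha : 0 ≤ a) (hb : 0 ≤ b) (hab : a + b = 1) :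
    a * √(1 - (x / Y)^2) + b * √(1 - (y / Y)^2) ≤ √(1 - ((a * x + b * y) / Y)^2) := by
  have e : (a * x + b * y) / Y = a * (x / Y) + b * (y / Y) := by ring
  rw [e]
  set u := x / Y
  set v := y / Y
  have hu : 0 ≤ 1 - u^2 := by have := (sq_le_one_iff_abs_le_one u).2 hx; linarith
  have hv : 0 ≤ 1 - v^2 := by have := (sq_le_one_iff_abs_le_one v).2 hy; linarith
  apply Real.le_sqrt_of_sq_le
  have hp := Real.sq_sqrt hu
  have hq := Real.sq_sqrt hv
  set p := √(1 - u^2)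
  set q := √(1 - v^2)
  have h1 : p * q + u * v ≤ 1 := by nlinarith [sq_nonneg (p - q), sq_nonneg (u - v)]
  have h2 := mul_le_mul_of_nonneg_left h1 (mul_nonneg ha hb)
  have hb' : b = 1 - a := by linarith
  subst hb'
  have e3 : 1 - (a * u + (1 - a) * v)^2 - (a * p + (1 - a) * q)^2 =
      2 * (a * (1 - a) * 1 - a * (1 - a) * (p * q + u * v)) := by
    linear_combination (-(a^2)) * hp - (1 - a)^2 * hq
  linarith

/-- quarter circle of radius Y, height 1 -/
noncomputable def qf (Y x : ℝ) : ℝ := √(1 - (x / Y)^2)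

lemma qf_cont (Y : ℝ) : Continuous (qf Y) := by unfold qf; fun_prop

lemma qf_nonneg (Y x : ℝ) : 0 ≤ qf Y x := Real.sqrt_nonneg _

lemma qf_le_one (Y x : ℝ) : qf Y x ≤ 1 := by
  unfold qf
  rw [Real.sqrt_le_left (by norm_num)]
  nlinarith [sq_nonneg (x / Y)]

lemma qf_integral {Y : ℝ} (hY : 0 < Y) : ∫ x in (0:ℝ)..Y, qf Y x = Real.pi * Y / 4 := by
  unfold qf
  rw [intervalIntegral.integral_comp_div (fun x => √(1 - x^2)) hY.ne']
  rw [zero_div, div_self hY.ne', smul_eq_mul]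
  have h := integral_sqrt_one_sub_sq
  have hc : Continuous (fun x : ℝ => √(1 - x^2)) := by fun_prop
  rw [← intervalIntegral.integral_add_adjacent_intervals (b := 0) (hc.intervalIntegrable _ _)
    (hc.intervalIntegrable _ _)] at h
  have h2 : ∫ x in (-1:ℝ)..0, √(1 - x^2) = ∫ x in (0:ℝ)..1, √(1 - x^2) := by
    have := intervalIntegral.integral_comp_neg (a := 0) (b := 1) (fun x : ℝ => √(1 - x^2))
    simp only [neg_zero, even_two, Even.neg_pow] at this
    exact this.symm
  rw [h2] at h
  have : ∫ x in (0:ℝ)..1, √(1 - x^2) = Real.pi / 4 := by linarith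
  rw [this]; ring

lemma qf_lower {Y m x : ℝ} (hY : 0 < Y) (hm : 0 ≤ m) (hmY : m + 1 ≤ Y) (h1 : m ≤ x)
    (h2 : x ≤ m + 1) : (m + 1 - x) * qf Y m + (x - m) * qf Y (m + 1) ≤ qf Y x := by
  have := conc_aux (Y := Y) (x := m) (y := m + 1) (a := m + 1 - x) (b := x - m)
    (by rw [abs_of_nonneg (by positivity), div_le_one hY]; linarith)
    (by rw [abs_of_nonneg (by positivity), div_le_one hY]; linarith)
    (by linarith) (by linarith) (by ring)
  unfold qf
  convert this using 4
  ring

lemma qf_upper {Y m x : ℝ} (hY : 1 ≤ Y) (hm : 0 ≤ m) (hmY : m + 1 ≤ Y) (h1 : m ≤ x)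
    (h2 : x ≤ m + 1) : qf Y x ≤ qf Y m + (x - m) * (qf Y m - qf Y (m - 1)) := by
  -- m = (1/(1+t)) x + (t/(1+t)) (m-1), t = x - m
  have ht : 0 < 1 + (x - m) := by linarith
  have hY0 : 0 < Y := by linarith
  have := conc_aux (Y := Y) (x := x) (y := m - 1) (a := 1 / (1 + (x - m)))
    (b := (x - m) / (1 + (x - m)))
    (by rw [abs_of_nonneg (div_nonneg (by linarith) (by linarith)), div_le_one hY0]; linarith)
    (by rw [abs_div, abs_of_pos hY0, div_le_one hY0, abs_le]; constructor <;> linarith)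
    (by positivity) (div_nonneg (by linarith) ht.le) (by field_simp)
  have e : 1 / (1 + (x - m)) * x + (x - m) / (1 + (x - m)) * (m - 1) = m := by
    field_simp; ring
  rw [e] at this
  unfold qf
  set A := √(1 - (x / Y)^2)
  set B := √(1 - ((m - 1) / Y)^2)
  set C := √(1 - (m / Y)^2)
  have e2 : 1 / (1 + (x - m)) * A + (x - m) / (1 + (x - m)) * B =
    (A + (x - m) * B) / (1 + (x - m)) := by field_simp
  rw [e2, div_le_iff₀ ht] at this
  linarith

lemma lin_int (m A B : ℝ) : ∫ x in m..(m+1), (A + (x - m) * B) = A + B / 2 := by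
  have h := intervalIntegral.integral_comp_sub_right (a := m) (b := m + 1)
    (fun x : ℝ => A + x * B) m
  rw [h]
  simp only [sub_self, add_sub_cancel_left]
  rw [intervalIntegral.integral_add (by simp) (by apply Continuous.intervalIntegrable; fun_prop)]
  simp
  ring

lemma qf_int_bounds {Y m : ℝ} (hY : 1 ≤ Y) (hm : 0 ≤ m) (hmY : m + 1 ≤ Y) :
    (qf Y m + qf Y (m + 1)) / 2 ≤ ∫ x in m..(m+1), qf Y x ∧
    ∫ x in m..(m+1), qf Y x ≤ qf Y m + (qf Y m - qf Y (m - 1)) / 2 := by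
  constructor
  · have := lin_int m (qf Y m) (qf Y (m+1) - qf Y m)
    calc _ = ∫ x in m..(m+1), (qf Y m + (x - m) * (qf Y (m+1) - qf Y m)) := by rw [this]; ring
      _ ≤ _ := by
        apply intervalIntegral.integral_mono_on (by linarith)
        · apply Continuous.intervalIntegrable; fun_prop
        · exact (qf_cont Y).intervalIntegrable _ _
        · intro x hx
          have := qf_lower (by linarith) hm hmY hx.1 hx.2
          linarith
  · rw [← lin_int m]
    apply intervalIntegral.integral_mono_on (by linarith)
    · exact (qf_cont Y).intervalIntegrable _ _
    · apply Continuous.intervalIntegrable; fun_prop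
    · intro x hx
      exact qf_upper hY hm hmY hx.1 hx.2

noncomputable def Gs (Y : ℝ) : ℝ := ∑ m ∈ Finset.Ioc 0 ⌊Y⌋₊, qf Y m

lemma qf_trap {Y : ℝ} (hY : 1 ≤ Y) (N : ℕ) (hN : (N:ℝ) ≤ Y) :
    (∑ m ∈ Finset.Ioc 0 N, qf Y m) + (qf Y 0 - qf Y N) / 2 ≤ ∫ x in (0:ℝ)..N, qf Y x ∧
    ∫ x in (0:ℝ)..N, qf Y x ≤ (∑ m ∈ Finset.Ioc 0 N, qf Y m) + (qf Y 0 - qf Y N) / 2 +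
      ((qf Y 0 - qf Y (-1)) - (qf Y N - qf Y (N - 1))) / 2 := by
  induction N with
  | zero => simp
  | succ N ih =>
    push_cast at hN
    obtain ⟨h1, h2⟩ := ih (by linarith)
    obtain ⟨h3, h4⟩ := qf_int_bounds (m := N) hY (by positivity) hN
    rw [Finset.sum_Ioc_succ_top (by omega)]
    push_cast
    rw [← intervalIntegral.integral_add_adjacent_intervals (b := (N:ℝ))
      ((qf_cont Y).intervalIntegrable _ _) ((qf_cont Y).intervalIntegrable _ _)]
    have e : (N:ℝ) + 1 - 1 = N := by ring
    rw [e]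
    constructor <;> linarith

lemma Gs_asymp {Y : ℝ} (hY : 1 ≤ Y) : |Gs Y - (Real.pi * Y / 4 - 1 / 2)| ≤ 2 / √Y := by
  have hY0 : 0 < Y := by linarith
  set N := ⌊Y⌋₊ with hNdef
  have hN1 : (N:ℝ) ≤ Y := Nat.floor_le hY0.le
  have hN2 : Y < N + 1 := Nat.lt_floor_add_one _
  have hN3 : (1:ℝ) ≤ N := by exact_mod_cast Nat.floor_pos.2 hY
  obtain ⟨h1, h2⟩ := qf_trap hY N hN1
  have h3 := qf_integral hY0
  rw [← intervalIntegral.integral_add_adjacent_intervals (b := (N:ℝ))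
      ((qf_cont Y).intervalIntegrable _ _) ((qf_cont Y).intervalIntegrable _ _)] at h3
  have h4 : 0 ≤ ∫ x in (N:ℝ)..Y, qf Y x :=
    intervalIntegral.integral_nonneg hN1 fun x _ => qf_nonneg _ _
  have h5 : ∫ x in (N:ℝ)..Y, qf Y x ≤ qf Y N := by
    calc _ ≤ ∫ x in (N:ℝ)..Y, qf Y N := by
          apply intervalIntegral.integral_mono_on hN1
          · exact (qf_cont Y).intervalIntegrable _ _
          · simp
          · intro x hx
            unfold qf
            apply Real.sqrt_le_sqrt
            have := hx.1
            gcongr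
      _ = (Y - N) * qf Y N := by simp
      _ ≤ _ := mul_le_of_le_one_left (qf_nonneg _ _) (by linarith)
  have h0 : qf Y 0 = 1 := by simp [qf]
  have hs : 0 < √Y := Real.sqrt_pos.2 hY0
  have hs1 : 1 ≤ √Y := Real.one_le_sqrt.2 hY
  have hsq : √Y ^ 2 = Y := Real.sq_sqrt hY0.le
  have h6 : qf Y (N - 1) ≤ 2 / √Y := by
    unfold qf
    rw [Real.sqrt_le_left (by positivity), div_pow 2, hsq]
    set t := ((N:ℝ) - 1) / Y with ht
    have : 1 - t ≤ 2 / Y := by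
      rw [ht, one_sub_div hY0.ne']
      gcongr
      linarith
    have e : (2:ℝ)^2 / Y = 2 * (2 / Y) := by ring
    rw [e]
    nlinarith [sq_nonneg (1 - t)]
  have h7 : qf Y N ≤ 2 / √Y := by
    refine le_trans ?_ h6
    unfold qf
    apply Real.sqrt_le_sqrt
    have : 0 ≤ ((N:ℝ) - 1) := by linarith
    gcongr
    linarith
  have h8 : 1 - qf Y (-1) ≤ 1 / √Y := by
    have hy : (1 / Y)^2 ≤ 1 := by
      rw [sq_le_one_iff_abs_le_one, abs_of_pos (by positivity), div_le_one hY0]; exact hY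
    have h9 : 1 - (1 / Y)^2 ≤ qf Y (-1) := by
      unfold qf
      have e : (-1 / Y)^2 = (1 / Y)^2 := by ring
      rw [e]
      apply Real.le_sqrt_of_sq_le
      nlinarith [sq_nonneg (1/Y)]
    have h10 : (1 / Y)^2 ≤ 1 / √Y := by
      rw [div_pow, one_pow]
      apply one_div_le_one_div_of_le hs
      nlinarith
    linarith
  have hN0 := qf_nonneg Y N
  have e3 : 2 / √Y = 2 * (1 / √Y) := by ring
  rw [abs_le]
  have hG : Gs Y = ∑ m ∈ Finset.Ioc 0 N, qf Y m := rfl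
  rw [hG]
  rw [h0] at h1 h2
  constructor <;> linarith

lemma Gs_nonneg (Y : ℝ) : 0 ≤ Gs Y := Finset.sum_nonneg fun _ _ => qf_nonneg _ _

lemma Gs_le {Y : ℝ} (hY : 0 ≤ Y) : Gs Y ≤ Y := by
  calc Gs Y ≤ ∑ m ∈ Finset.Ioc 0 ⌊Y⌋₊, (1:ℝ) := Finset.sum_le_sum fun _ _ => qf_le_one _ _
    _ = (⌊Y⌋₊ : ℝ) := by simp
    _ ≤ Y := Nat.floor_le hY

lemma Gs_mono {Y Y' : ℝ} (hY : 0 < Y) (h : Y ≤ Y') : Gs Y ≤ Gs Y' := by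
  calc Gs Y ≤ ∑ m ∈ Finset.Ioc 0 ⌊Y⌋₊, qf Y' m := by
        refine Finset.sum_le_sum fun m _ => ?_
        unfold qf
        apply Real.sqrt_le_sqrt
        have : 0 < Y' := by linarith
        gcongr
    _ ≤ _ := Finset.sum_le_sum_of_subset_of_nonneg
        (Finset.Ioc_subset_Ioc_right (Nat.floor_le_floor h)) fun _ _ _ => qf_nonneg _ _

lemma abel_bound (D : ℕ) (η : ℝ) (hη : ∀ k, D ≤ k → |mm k| ≤ η) (b : ℕ → ℝ)
    (hb0 : ∀ k, D < k → 0 ≤ b k) (hb : ∀ k, D < k → b (k + 1) ≤ b k) (N : ℕ) (hN : D ≤ N) :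
    |∑ d ∈ Finset.Ioc D N, cf d * b d| ≤ 2 * η * b (D + 1) := by
  have hη0 : 0 ≤ η := (abs_nonneg _).trans (hη D le_rfl)
  have hd : ∀ k, D ≤ k → |mm k - mm D| ≤ 2 * η := fun k hk => by
    have := abs_sub (mm k) (mm D)
    have := hη k hk
    have := hη D le_rfl
    linarith
  rcases Nat.eq_or_lt_of_le hN with rfl | hlt
  · simp
    have := hb0 (D+1) (by omega)
    positivity
  have key : |∑ d ∈ Finset.Ioc D N, cf d * b d - (mm N - mm D) * b N| ≤
      2 * η * (b (D + 1) - b N) := by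
    induction N, (hlt : D + 1 ≤ N) using Nat.le_induction with
    | base =>
      rw [mm_sub (by omega)]
      simp
    | succ N h ih =>
      have ih := ih (by omega)
      have e : ∑ d ∈ Finset.Ioc D (N+1), cf d * b d - (mm (N+1) - mm D) * b (N+1) =
          (∑ d ∈ Finset.Ioc D N, cf d * b d - (mm N - mm D) * b N) +
          (mm N - mm D) * (b N - b (N+1)) := by
        rw [Finset.sum_Ioc_succ_top (by omega)]
        have : mm (N+1) = mm N + cf (N+1) := by
          rw [mm, Finset.sum_Icc_succ_top (by omega), mm]
        rw [this]; ring
      rw [e]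
      refine (abs_add_le _ _).trans ?_
      rw [abs_mul (mm N - mm D)]
      have h1 := hb N (by omega)
      rw [abs_of_nonneg (sub_nonneg.2 h1)]
      have := mul_le_mul_of_nonneg_right (hd N (by omega)) (sub_nonneg.2 h1)
      linarith
  have h1 := abs_sub_abs_le_abs_sub (∑ d ∈ Finset.Ioc D N, cf d * b d) ((mm N - mm D) * b N)
  have h2 : |(mm N - mm D) * b N| ≤ 2 * η * b N := by
    rw [abs_mul, abs_of_nonneg (hb0 N hlt)]
    exact mul_le_mul_of_nonneg_right (hd N hN) (hb0 N hlt)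
  linarith

lemma cf_hasSum : HasSum (fun n : ℕ => cf n * (1 / (n:ℝ))) (6 / Real.pi^2) := by
  obtain ⟨h1, h2⟩ := cf_LSeries (s := 1) (by simp)
  have h3 : HasSum (LSeries.term (fun n => (cf n : ℂ)) 1) (LSeries (fun n => (cf n : ℂ)) 1) :=
    h1.hasSum
  rw [h2] at h3
  have e : (1 + 1 : ℂ) = 2 := by norm_num
  rw [e, riemannZeta_two] at h3
  rw [← Complex.hasSum_ofReal]
  convert h3 using 1
  · ext n
    rcases Nat.eq_zero_or_pos n with rfl | hn
    · simp
    · rw [LSeries.term_of_ne_zero hn.ne', Complex.cpow_one]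
      push_cast
      ring
  · push_cast
    rw [inv_div]

lemma cf_tail (D : ℕ) (η : ℝ) (hη : ∀ k, D ≤ k → |mm k| ≤ η) :
    |6 / Real.pi^2 - ∑ d ∈ Finset.Ioc 0 D, cf d * (1 / (d:ℝ))| ≤ 2 * η * (1 / ((D:ℝ) + 1)) := by
  have h := cf_hasSum.tendsto_sum_nat
  have h1 := (tendsto_add_atTop_iff_nat 1).2 h
  have h2 : Tendsto (fun n : ℕ => |∑ i ∈ Finset.range (n+1), cf i * (1 / (i:ℝ)) -
      ∑ d ∈ Finset.Ioc 0 D, cf d * (1 / (d:ℝ))|) atTop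
      (𝓝 |6 / Real.pi^2 - ∑ d ∈ Finset.Ioc 0 D, cf d * (1 / (d:ℝ))|) :=
    (h1.sub_const _).abs
  refine le_of_tendsto h2 ?_
  filter_upwards [eventually_ge_atTop D] with n hn
  have e1 : ∑ i ∈ Finset.range (n+1), cf i * (1 / (i:ℝ)) =
      ∑ d ∈ Finset.Ioc 0 n, cf d * (1 / (d:ℝ)) := by
    rw [Finset.range_eq_Ico, ← Finset.sum_Ioo_add_eq_sum_Ico (by omega)]
    simp only [Nat.cast_zero, div_zero, mul_zero, add_zero]
    refine Finset.sum_congr ?_ fun _ _ => rfl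
    ext; simp only [Finset.mem_Ioo, Finset.mem_Ioc]; omega
  rw [e1, ← Finset.sum_Ioc_consecutive _ (Nat.zero_le D) hn, add_sub_cancel_left]
  have := abel_bound D η hη (fun d => 1 / (d:ℝ)) (fun k _ => by positivity) (fun k hk => by
    have : (0:ℝ) < k := by exact_mod_cast (by omega)
    push_cast
    apply one_div_le_one_div_of_le this
    linarith) n hn
  push_cast at this
  exact this

noncomputable def SS (X : ℝ) : ℝ :=
  ∑ q ∈ Finset.Ioc 0 ⌊X⌋₊, (Nat.totient q : ℝ) / q * qf X q

lemma totient_eq (q : ℕ) (hq : 0 < q) :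
    (Nat.totient q : ℝ) / q = ∑ x ∈ q.divisorsAntidiagonal, cf x.1 := by
  have h := (ArithmeticFunction.sum_eq_iff_sum_mul_moebius_eq (R := ℝ)
    (f := fun n => (Nat.totient n : ℝ)) (g := fun n => (n:ℝ))).1 (fun n _ => by
      exact_mod_cast Nat.sum_totient n) q hq
  rw [← h, Finset.sum_div]
  refine Finset.sum_congr rfl fun x hx => ?_
  have hx' := (Nat.mem_divisorsAntidiagonal.1 hx).1
  have hq' : (q:ℝ) = x.1 * x.2 := by exact_mod_cast hx'.symm
  have h2 : (x.2:ℝ) ≠ 0 := by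
    intro h0
    rw [h0, mul_zero] at hq'
    exact hq.ne' (by exact_mod_cast hq')
  rw [cf, hq', mul_div_mul_right _ _ h2]

lemma SS_eq {X : ℝ} : SS X = ∑ d ∈ Finset.Ioc 0 ⌊X⌋₊, cf d * Gs (X / d) := by
  unfold SS
  set N := ⌊X⌋₊ with hN
  trans ∑ n ∈ Finset.Ioc 0 N, ∑ x ∈ Finset.Ioc 0 N ×ˢ Finset.Ioc 0 N with x.1 * x.2 = n,
    cf x.1 * qf X ((x.1 * x.2 : ℕ) : ℝ)
  · refine Finset.sum_congr rfl fun n hn ↦ ?_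
    simp only [Finset.mem_Ioc] at hn
    rw [totient_eq n hn.1, Nat.divisorsAntidiagonal_eq_prod_filter_of_le hn.1.ne' hn.2,
      Finset.sum_mul]
    refine Finset.sum_congr rfl fun x hx => ?_
    rw [(Finset.mem_filter.1 hx).2]
  trans ∑ x ∈ Finset.Ioc 0 N ×ˢ Finset.Ioc 0 N with x.1 * x.2 ≤ N,
    cf x.1 * qf X ((x.1 * x.2 : ℕ) : ℝ)
  · simp_rw [Finset.sum_filter]
    rw [Finset.sum_comm]
    refine Finset.sum_congr rfl fun x hx ↦ ?_
    simp only [Finset.mem_product, Finset.mem_Ioc] at hx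
    rw [Finset.sum_ite_eq]
    have : 0 < x.1 * x.2 := Nat.mul_pos hx.1.1 hx.2.1
    simp only [Finset.mem_Ioc, this, true_and]
  rw [Finset.sum_filter, Finset.sum_product]
  refine Finset.sum_congr rfl fun d hd ↦ ?_
  simp only [Finset.mem_Ioc] at hd
  rw [Gs, Finset.mul_sum, Nat.floor_div_natCast, ← hN, ← Finset.sum_filter]
  have hset : Finset.filter (fun m => d * m ≤ N) (Finset.Ioc 0 N) = Finset.Ioc 0 (N / d) := by
    ext m
    simp only [Finset.mem_filter, Finset.mem_Ioc, Nat.le_div_iff_mul_le hd.1, mul_comm m d]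
    constructor
    · rintro ⟨⟨h1, _⟩, h2⟩; exact ⟨h1, h2⟩
    · rintro ⟨h1, h2⟩; exact ⟨⟨h1, (Nat.le_mul_of_pos_left m hd.1).trans h2⟩, h2⟩
  rw [hset]
  refine Finset.sum_congr rfl fun m _ => ?_
  unfold qf
  push_cast
  congr 4
  rw [div_div_eq_mul_div, mul_comm]

lemma sum_inv_sqrt (D : ℕ) : ∑ d ∈ Finset.Ioc 0 D, 1 / √(d:ℝ) ≤ 2 * √(D:ℝ) := by
  induction D with
  | zero => simp
  | succ D ih =>
    rw [Finset.sum_Ioc_succ_top (by omega)]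
    push_cast
    have h1 : 0 ≤ √(D:ℝ) := Real.sqrt_nonneg _
    have h2 : 0 < √((D:ℝ) + 1) := Real.sqrt_pos.2 (by positivity)
    have e1 : √(D:ℝ)^2 = D := Real.sq_sqrt (by positivity)
    have e2 : √((D:ℝ)+1)^2 = D + 1 := Real.sq_sqrt (by positivity)
    have h3 : 1 / √((D:ℝ)+1) ≤ 2 * √((D:ℝ)+1) - 2 * √(D:ℝ) := by
      rw [div_le_iff₀ h2]
      nlinarith [sq_nonneg (√((D:ℝ)+1) - √(D:ℝ))]
    linarith

lemma SS_bound {X δ η : ℝ} (hX : 1 ≤ X) (hδ : 0 < δ) (hδ1 : δ ≤ 1)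
    (hη : ∀ k, ⌊δ * X⌋₊ ≤ k → |mm k| ≤ η) :
    |SS X - 3 * X / (2 * Real.pi)| ≤ 5 * η / δ + 4 * √δ := by
  have hX0 : 0 < X := by linarith
  set N := ⌊X⌋₊ with hN
  set D := ⌊δ * X⌋₊ with hD
  have hDN : D ≤ N := Nat.floor_le_floor (by nlinarith)
  have hη0 : 0 ≤ η := (abs_nonneg _).trans (hη D le_rfl)
  have hD1 : (D:ℝ) ≤ δ * X := Nat.floor_le (by positivity)
  have hD2 : δ * X < D + 1 := Nat.lt_floor_add_one _
  have hXD : X / ((D:ℝ) + 1) ≤ 1 / δ := by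
    rw [div_le_div_iff₀ (by positivity) hδ]; linarith
  have hpi := Real.pi_pos
  -- four pieces
  have p1 := cf_tail D η hη
  have p2 := hη D le_rfl
  have p4 := abel_bound D η hη (fun d => Gs (X / d)) (fun k _ => Gs_nonneg _) (fun k hk => by
    have : (0:ℝ) < k := by exact_mod_cast (by omega)
    apply Gs_mono (by positivity)
    push_cast
    gcongr
    linarith) N hDN
  have p4' : Gs (X / ((D+1 : ℕ):ℝ)) ≤ 1 / δ := by
    refine (Gs_le (by positivity)).trans ?_
    push_cast; exact hXD
  have p3 : |∑ d ∈ Finset.Ioc 0 D, cf d * (Gs (X / d) - (Real.pi * (X / d) / 4 - 1/2))| ≤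
      4 * √δ := by
    have hsX : 0 < √X := Real.sqrt_pos.2 hX0
    calc _ ≤ ∑ d ∈ Finset.Ioc 0 D, |cf d * (Gs (X / d) - (Real.pi * (X / d) / 4 - 1/2))| :=
          Finset.abs_sum_le_sum_abs _ _
      _ ≤ ∑ d ∈ Finset.Ioc 0 D, (2 / √X) * (1 / √(d:ℝ)) := by
          refine Finset.sum_le_sum fun d hd => ?_
          simp only [Finset.mem_Ioc] at hd
          have hd0 : (0:ℝ) < d := by exact_mod_cast hd.1
          have hdD : (d:ℝ) ≤ D := by exact_mod_cast hd.2
          have hsd : 0 < √(d:ℝ) := Real.sqrt_pos.2 hd0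
          rw [abs_mul]
          have h1 := Gs_asymp (Y := X / d) (by rw [one_le_div hd0]; nlinarith)
          calc _ ≤ 1 / (d:ℝ) * (2 / √(X / d)) := by
                gcongr
                exact abs_cf_le d
            _ = _ := by
                rw [Real.sqrt_div hX0.le]
                have e : (d:ℝ) = √(d:ℝ)^2 := (Real.sq_sqrt hd0.le).symm
                conv_lhs => rw [e]
                rw [Real.sqrt_sq hsd.le]
                field_simp
      _ = (2 / √X) * ∑ d ∈ Finset.Ioc 0 D, 1 / √(d:ℝ) := by rw [Finset.mul_sum]
      _ ≤ (2 / √X) * (2 * √(δ * X)) := by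
          gcongr
          refine (sum_inv_sqrt D).trans ?_
          gcongr
      _ = 4 * √δ := by
          rw [Real.sqrt_mul hδ.le]
          field_simp
          norm_num
  have hmm : mm D = ∑ d ∈ Finset.Ioc 0 D, cf d := by
    rw [mm]; exact Finset.sum_congr (by ext; simp; omega) fun _ _ => rfl
  have e : SS X - 3 * X / (2 * Real.pi) =
      - (Real.pi * X / 4) * (6 / Real.pi^2 - ∑ d ∈ Finset.Ioc 0 D, cf d * (1 / (d:ℝ)))
      - mm D / 2
      + ∑ d ∈ Finset.Ioc 0 D, cf d * (Gs (X / d) - (Real.pi * (X / d) / 4 - 1/2))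
      + ∑ d ∈ Finset.Ioc D N, cf d * Gs (X / d) := by
    rw [SS_eq, ← hN, ← Finset.sum_Ioc_consecutive _ (Nat.zero_le D) hDN, hmm]
    have e1 : ∑ d ∈ Finset.Ioc 0 D, cf d * Gs (X / d) =
        (Real.pi * X / 4) * ∑ d ∈ Finset.Ioc 0 D, cf d * (1 / (d:ℝ))
        - (∑ d ∈ Finset.Ioc 0 D, cf d) / 2
        + ∑ d ∈ Finset.Ioc 0 D, cf d * (Gs (X / d) - (Real.pi * (X / d) / 4 - 1/2)) := by
      rw [Finset.mul_sum, Finset.sum_div, ← Finset.sum_sub_distrib, ← Finset.sum_add_distrib]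
      refine Finset.sum_congr rfl fun d _ => ?_
      ring
    rw [e1]
    have e2 : (Real.pi * X / 4) * (6 / Real.pi^2) = 3 * X / (2 * Real.pi) := by
      field_simp; norm_num
    rw [← e2]
    ring
  rw [e]
  set P := 6 / Real.pi^2 - ∑ d ∈ Finset.Ioc 0 D, cf d * (1 / (d:ℝ))
  set Q := ∑ d ∈ Finset.Ioc 0 D, cf d * (Gs (X / d) - (Real.pi * (X / d) / 4 - 1/2))
  set R := ∑ d ∈ Finset.Ioc D N, cf d * Gs (X / d)
  have b1 : |-(Real.pi * X / 4) * P| ≤ 2 * η / δ := by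
    rw [abs_mul, abs_neg, abs_of_pos (by positivity)]
    calc _ ≤ (Real.pi * X / 4) * (2 * η * (1 / ((D:ℝ) + 1))) := by gcongr
      _ = (Real.pi / 2) * η * (X / ((D:ℝ)+1)) := by ring
      _ ≤ 2 * η * (1 / δ) := by
        gcongr
        have := Real.pi_le_four
        linarith
      _ = _ := by ring
  have b2 : |mm D / 2| ≤ η / δ := by
    rw [abs_div, abs_two]
    have : η ≤ η / δ := by rw [le_div_iff₀ hδ]; nlinarith
    linarith [abs_nonneg (mm D)]
  have b4 : |R| ≤ 2 * η / δ := by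
    refine p4.trans ?_
    calc _ ≤ 2 * η * (1 / δ) := by gcongr
      _ = _ := by ring
  have t1 := abs_add_le (-(Real.pi * X / 4) * P - mm D / 2 + Q) R
  have t2 := abs_add_le (-(Real.pi * X / 4) * P - mm D / 2) Q
  have t3 := abs_sub (-(Real.pi * X / 4) * P) (mm D / 2)
  have e5 : 5 * η / δ = 2 * η / δ + η / δ + 2 * η / δ := by ring
  linarith

lemma SS_tendsto : Tendsto (fun X : ℝ => SS X - 3 * X / (2 * Real.pi)) atTop (𝓝 0) := by
  rw [Metric.tendsto_nhds]
  intro e he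
  set δ := min 1 ((e / 16)^2) with hδ
  have hδ0 : 0 < δ := by positivity
  have hs : 4 * √δ ≤ e / 4 := by
    have : √δ ≤ e / 16 := by
      rw [Real.sqrt_le_left (by positivity)]; exact min_le_right _ _
    linarith
  obtain ⟨K, hK⟩ := Metric.tendsto_atTop.1 mm_tendsto (e * δ / 20) (by positivity)
  filter_upwards [eventually_ge_atTop 1, eventually_ge_atTop ((K:ℝ) / δ)] with X h1 h2
  have h3 : K ≤ ⌊δ * X⌋₊ := by
    apply Nat.le_floor
    rw [div_le_iff₀ hδ0] at h2
    linarith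
  have := SS_bound (η := e * δ / 20) h1 hδ0 (min_le_left _ _) (fun k hk => by
    have := hK k (h3.trans hk)
    rw [Real.dist_eq, sub_zero] at this
    exact this.le)
  rw [Real.dist_eq, sub_zero]
  have e5 : 5 * (e * δ / 20) / δ = e / 4 := by field_simp; norm_num
  rw [e5] at this
  linarith

lemma L_eq {ε : ℝ} (hε : 0 < ε) : L ε = 2 * √ε * SS (1 / √ε) := by
  unfold L SS
  have hs : 0 < √ε := Real.sqrt_pos.2 hε
  have hsq : √ε ^ 2 = ε := Real.sq_sqrt hε.le
  congr 1
  have hiff : ∀ q : ℕ, (1 ≤ q ∧ (q:ℝ)^2 ≤ 1 / ε) ↔ q ∈ Finset.Ioc 0 ⌊1 / √ε⌋₊ := by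
    intro q
    rw [Finset.mem_Ioc, Nat.le_floor_iff (by positivity)]
    refine and_congr Iff.rfl ?_
    rw [← hsq, ← one_div_pow, sq_le_sq₀ (by positivity) (by positivity), hsq]
  rw [tsum_eq_sum (s := Finset.Ioc 0 ⌊1 / √ε⌋₊)]
  · refine Finset.sum_congr rfl fun q hq => ?_
    rw [if_pos ((hiff q).2 hq)]
    have hq0 : (0:ℝ) < q := by exact_mod_cast (Finset.mem_Ioc.1 hq).1
    have e1 : 1 / (q:ℝ)^2 - ε = (1 - ((q:ℝ) / (1 / √ε))^2) / (q:ℝ)^2 := by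
      rw [div_div_eq_mul_div, div_one, mul_pow, hsq]
      field_simp
    rw [e1, Real.sqrt_div' _ (by positivity), Real.sqrt_sq hq0.le, qf]
    ring
  · intro q hq
    rw [if_neg (fun h => hq ((hiff q).1 h))]

/-- `L(ε) = 3/π + o(√ε)` as `ε → 0⁺`. -/
theorem L_littleO_sqrt :
    Filter.Tendsto (fun ε : ℝ => (L ε - 3 / Real.pi) / Real.sqrt ε)
      (nhdsWithin 0 (Set.Ioi 0)) (nhds 0) := by
  have h1 : Tendsto (fun ε : ℝ => 1 / √ε) (𝓝[>] 0) atTop := by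
    have h2 : Tendsto (fun ε : ℝ => √ε) (𝓝[>] 0) (𝓝[>] 0) := by
      refine tendsto_nhdsWithin_iff.2 ⟨?_, ?_⟩
      · have := (Real.continuous_sqrt.tendsto 0).mono_left (nhdsWithin_le_nhds (s := Set.Ioi 0))
        simpa using this
      · filter_upwards [self_mem_nhdsWithin] with ε hε
        exact Real.sqrt_pos.2 hε
    simp only [one_div]
    exact tendsto_inv_nhdsGT_zero.comp h2
  have h3 := (SS_tendsto.comp h1).const_mul 2
  rw [mul_zero] at h3
  refine h3.congr' ?_
  filter_upwards [self_mem_nhdsWithin] with ε hε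
  have hs : 0 < √ε := Real.sqrt_pos.2 hε
  have hpi := Real.pi_pos
  rw [L_eq hε]
  simp only [Function.comp]
  field_simp
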